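/- Let w_x and w_y denote the lengths of the orthogonal projections of Ω onto the x-axis and onto the y-axis, respectively. Then sup{ ‖u_x‖₁ / ‖u_y‖₁ : u ∈ 𝒰_Ω, u ≢ 0 } = 2 w_y / w_x if and only if Ω contains a vertical segment of length w_y, i.e. a vertical segment whose endpoints lie on the two horizontal lines of support of Ω (the horizontal sides of the circumscribed axis-parallel rectangle). -/

import Mathlib

open Set MeasureTheory
open scoped ENNReal

/-- Partial derivative of `u` in the `x` direction (junk value where `u` is not
differentiable). -/
noncomputable def ux (u : ℝ × ℝ → ℝ) (z : ℝ × ℝ) : ℝ := fderiv ℝ u z (1, 0)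

/-- Partial derivative of `u` in the `y` direction. -/
noncomputable def uy (u : ℝ × ℝ → ℝ) (z : ℝ × ℝ) : ℝ := fderiv ℝ u z (0, 1)

/-- Directional derivative of `u` in the direction `h`. -/
noncomputable def uh (h : ℝ × ℝ) (u : ℝ × ℝ → ℝ) (z : ℝ × ℝ) : ℝ := fderiv ℝ u z h

/-- The class `𝒰_Ω`: continuous concave functions on `Ω` vanishing on the boundary,
with uniformly bounded gradient over all interior points where it exists. -/
def MemU (Ω : Set (ℝ × ℝ)) (u : ℝ × ℝ → ℝ) : Prop :=
  ContinuousOn u Ω ∧ ConcaveOn ℝ Ω u ∧ (∀ z ∈ frontier Ω, u z = 0) ∧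
    ∃ C : ℝ, ∀ z ∈ interior Ω, ∀ g : (ℝ × ℝ) →L[ℝ] ℝ, HasFDerivAt u g z → ‖g‖ ≤ C

/-- The `L¹` norm of `f` over `Ω`. -/
noncomputable def L1N (Ω : Set (ℝ × ℝ)) (f : ℝ × ℝ → ℝ) : ℝ := ∫ z in Ω, |f z|

/-- The `L^p` norm of `f` over `Ω`, `p ∈ [1, ∞)`. -/
noncomputable def LpN (Ω : Set (ℝ × ℝ)) (p : ℝ) (f : ℝ × ℝ → ℝ) : ℝ :=
  (∫ z in Ω, |f z| ^ p) ^ (1 / p)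

/-- The `L^∞` norm (essential supremum) of `f` over `Ω`. -/
noncomputable def LinfN (Ω : Set (ℝ × ℝ)) (f : ℝ × ℝ → ℝ) : ℝ≥0∞ :=
  essSup (fun z => ENNReal.ofReal |f z|) (volume.restrict Ω)

/-- The width of `Ω` parallel to the (Euclidean unit) vector `h`: the distance between the
two lines of support of `Ω` parallel to `h`, i.e. the oscillation over `Ω` of the linear
functional given by the unit normal `(-h.2, h.1)` to `h`. -/
noncomputable def widthPar (Ω : Set (ℝ × ℝ)) (h : ℝ × ℝ) : ℝ :=
  sSup ((fun z : ℝ × ℝ => -h.2 * z.1 + h.1 * z.2) '' Ω) -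
    sInf ((fun z : ℝ × ℝ => -h.2 * z.1 + h.1 * z.2) '' Ω)

/-!
On a vertical slice of `Ω` the concave function `u` rises from `0` to its maximum and falls back
to `0`, so `∫ |u_y| dy` over the slice is twice that maximum. Hence `‖u_y‖₁ = 2 ∫ φ`, where
`φ x = max u (x, ·)` is concave on `[a, b]`, and `‖u_x‖₁` is likewise twice the integral of the
concave profile of `u` on `[c, d]`. With `M = max u`, a concave profile with maximum `M` on an
interval of length `l` has integral between `l M / 2` and `l M`, which gives the bound
`2 (d - c) / (b - a)`.

If `u` is at least `h` at two points, concavity of `φ` improves the lower bound to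
`h (b - a + δ) / 2`, where `δ` is the distance between their abscissae. A quotient close to the
bound therefore needs values of `u` close to `M` near the bottom and the top of `Ω`, at nearly equal
abscissae; by compactness this forces a full vertical segment.

Conversely, given a full vertical segment, a tent over the abscissa with its ridge near the segment
has a triangular profile on `[a, b]` and an almost constant one on `[c, d]`. Cutting it off by a
steep cone gives it the boundary values `0`.
-/

section Interval

variable {f : ℝ → ℝ} {a b : ℝ}

lemma hasDerivWithinAt_Ioi_abs_of_monotoneOn (hf : MonotoneOn f (Icc a b)) {x : ℝ}
    (hx : x ∈ Ioo a b) (hd : DifferentiableWithinAt ℝ f (Ioi x) x) :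
    HasDerivWithinAt f |derivWithin f (Ioi x) x| (Ioi x) x := by
  have heq : derivWithin f (Ioo x b) x = derivWithin f (Ioi x) x :=
    (hd.hasDerivWithinAt.mono Ioo_subset_Ioi_self).derivWithin <|
      (uniqueDiffWithinAt_congr (nhdsWithin_Ioo_eq_nhdsGT hx.2)).2 (uniqueDiffWithinAt_Ioi x)
  have hsub : Ioo x b ⊆ Icc a b := fun y hy => ⟨(hx.1.trans hy.1).le, hy.2.le⟩
  rw [abs_of_nonneg (heq ▸ (hf.mono hsub).derivWithin_nonneg)]
  exact hd.hasDerivWithinAt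

lemma intervalIntegrable_abs_derivWithin_Ioi_of_monotoneOn (hab : a ≤ b)
    (hc : ContinuousOn f (Icc a b)) (hf : MonotoneOn f (Icc a b))
    (hd : ∀ x ∈ Ioo a b, DifferentiableWithinAt ℝ f (Ioi x) x) :
    IntervalIntegrable (fun x => |derivWithin f (Ioi x) x|) volume a b :=
  (intervalIntegrable_iff_integrableOn_Ioc_of_le hab).2 <|
    intervalIntegral.integrableOn_deriv_right_of_nonneg hc
      (fun x hx => hasDerivWithinAt_Ioi_abs_of_monotoneOn hf hx (hd x hx)) fun _ _ => abs_nonneg _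

lemma integral_abs_derivWithin_Ioi_of_monotoneOn (hab : a ≤ b)
    (hc : ContinuousOn f (Icc a b)) (hf : MonotoneOn f (Icc a b))
    (hd : ∀ x ∈ Ioo a b, DifferentiableWithinAt ℝ f (Ioi x) x) :
    ∫ x in a..b, |derivWithin f (Ioi x) x| = f b - f a :=
  intervalIntegral.integral_eq_sub_of_hasDeriv_right_of_le hab hc
    (fun x hx => hasDerivWithinAt_Ioi_abs_of_monotoneOn hf hx (hd x hx))
    (intervalIntegrable_abs_derivWithin_Ioi_of_monotoneOn hab hc hf hd)

lemma monotoneOn_Icc_left_of_isMaxOn_of_concaveOn {m : ℝ} (hf : ConcaveOn ℝ (Icc a b) f)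
    (hm : m ∈ Icc a b) (hmax : IsMaxOn f (Icc a b) m) : MonotoneOn f (Icc a m) := by
  intro x hx y hy hxy
  have hx' : x ∈ Icc a b := ⟨hx.1, hx.2.trans hm.2⟩
  simpa only [min_eq_left (isMaxOn_iff.1 hmax x hx')] using hf.min_le_of_mem_Icc hx' hm ⟨hxy, hy.2⟩

lemma antitoneOn_Icc_right_of_isMaxOn_of_concaveOn {m : ℝ} (hf : ConcaveOn ℝ (Icc a b) f)
    (hm : m ∈ Icc a b) (hmax : IsMaxOn f (Icc a b) m) : AntitoneOn f (Icc m b) := by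
  intro x hx y hy hxy
  have hy' : y ∈ Icc a b := ⟨hm.1.trans hy.1, hy.2⟩
  simpa only [min_eq_right (isMaxOn_iff.1 hmax y hy')] using hf.min_le_of_mem_Icc hm hy' ⟨hx.1, hxy⟩

lemma integral_abs_derivWithin_Ioi_of_concaveOn {m : ℝ} (hc : ContinuousOn f (Icc a b))
    (hf : ConcaveOn ℝ (Icc a b) f) (hm : m ∈ Icc a b) (hmax : IsMaxOn f (Icc a b) m) :
    ∫ x in a..b, |derivWithin f (Ioi x) x| = 2 * f m - f a - f b := by
  have hd : ∀ x ∈ Ioo a b, DifferentiableWithinAt ℝ (-f) (Ioi x) x := fun x hx =>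
    hf.neg.differentiableWithinAt_Ioi_of_mem_interior (by rwa [interior_Icc])
  have hcl : ContinuousOn f (Icc a m) := hc.mono (Icc_subset_Icc_right hm.2)
  have hcr : ContinuousOn (-f) (Icc m b) := (hc.mono (Icc_subset_Icc_left hm.1)).neg
  have hml := monotoneOn_Icc_left_of_isMaxOn_of_concaveOn hf hm hmax
  have hmr := (antitoneOn_Icc_right_of_isMaxOn_of_concaveOn hf hm hmax).neg
  have hdl : ∀ x ∈ Ioo a m, DifferentiableWithinAt ℝ f (Ioi x) x := fun x hx =>
    differentiableWithinAt_neg_iff.1 (hd x ⟨hx.1, hx.2.trans_le hm.2⟩)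
  have hdr : ∀ x ∈ Ioo m b, DifferentiableWithinAt ℝ (-f) (Ioi x) x := fun x hx =>
    hd x ⟨hm.1.trans_lt hx.1, hx.2⟩
  have hil := intervalIntegrable_abs_derivWithin_Ioi_of_monotoneOn hm.1 hcl hml hdl
  have hir := intervalIntegrable_abs_derivWithin_Ioi_of_monotoneOn hm.2 hcr hmr hdr
  have hl := integral_abs_derivWithin_Ioi_of_monotoneOn hm.1 hcl hml hdl
  have hr := integral_abs_derivWithin_Ioi_of_monotoneOn hm.2 hcr hmr hdr
  simp only [derivWithin.neg, abs_neg, Pi.neg_apply] at hir hr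
  rw [← intervalIntegral.integral_add_adjacent_intervals hil hir, hl, hr]
  ring

lemma integral_sub_left_endpoint : ∫ x in a..b, (x - a) = (b - a) ^ 2 / 2 := by
  rw [intervalIntegral.integral_comp_sub_right (fun x => x) a, integral_id]
  ring

lemma integral_right_endpoint_sub : ∫ x in a..b, (b - x) = (b - a) ^ 2 / 2 := by
  rw [intervalIntegral.integral_comp_sub_left (fun x => x) b, integral_id]
  ring

lemma mul_add_div_two_le_integral_of_concaveOn (hab : a ≤ b) (hf : ConcaveOn ℝ (Icc a b) f)
    (hi : IntervalIntegrable f volume a b) : (b - a) * (f a + f b) / 2 ≤ ∫ x in a..b, f x := by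
  rcases hab.eq_or_lt with rfl | hlt
  · simp
  have hpos : 0 < b - a := sub_pos.2 hlt
  have hchord : ∀ x ∈ Icc a b, (f a * (b - x) + f b * (x - a)) / (b - a) ≤ f x := fun x hx => by
    have h := hf.2 (left_mem_Icc.2 hab) (right_mem_Icc.2 hab)
      (div_nonneg (sub_nonneg.2 hx.2) hpos.le) (div_nonneg (sub_nonneg.2 hx.1) hpos.le)
      (by field_simp; ring)
    have hx' : (b - x) / (b - a) * a + (x - a) / (b - a) * b = x := by field_simp; ring
    simp only [smul_eq_mul, hx'] at h
    exact le_of_eq_of_le (by ring) h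
  calc (b - a) * (f a + f b) / 2
      = ∫ x in a..b, (f a * (b - x) + f b * (x - a)) / (b - a) := by
        rw [intervalIntegral.integral_div, intervalIntegral.integral_add
          (by apply Continuous.intervalIntegrable; fun_prop)
          (by apply Continuous.intervalIntegrable; fun_prop),
          intervalIntegral.integral_const_mul, intervalIntegral.integral_const_mul,
          integral_right_endpoint_sub, integral_sub_left_endpoint]
        field_simp
    _ ≤ ∫ x in a..b, f x := intervalIntegral.integral_mono_on hab
        (by apply Continuous.intervalIntegrable; fun_prop) hi hchord

lemma mul_add_abs_sub_le_two_mul_integral_of_concaveOn {p q h : ℝ}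
    (hf : ConcaveOn ℝ (Icc a b) f) (hi : IntervalIntegrable f volume a b) (ha : 0 ≤ f a)
    (hb : 0 ≤ f b) (hp : p ∈ Icc a b) (hq : q ∈ Icc a b) (hhp : h ≤ f p) (hhq : h ≤ f q) :
    h * ((b - a) + |q - p|) ≤ 2 * ∫ x in a..b, f x := by
  wlog hpq : p ≤ q generalizing p q
  · rw [abs_sub_comm]
    exact this hq hp hhq hhp (le_of_not_ge hpq)
  have hint {s t : ℝ} (hs : a ≤ s) (hst : s ≤ t) (ht : t ≤ b) :
      IntervalIntegrable f volume s t :=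
    hi.mono_set (by
      rw [uIcc_of_le hst, uIcc_of_le (hs.trans (hst.trans ht))]
      exact Icc_subset_Icc hs ht)
  have htrap {s t : ℝ} (hs : a ≤ s) (hst : s ≤ t) (ht : t ≤ b) :
      (t - s) * (f s + f t) / 2 ≤ ∫ x in s..t, f x :=
    mul_add_div_two_le_integral_of_concaveOn hst
      (hf.subset (Icc_subset_Icc hs ht) (convex_Icc s t)) (hint hs hst ht)
  have hleft : (p - a) * h ≤ (p - a) * (f a + f p) :=
    mul_le_mul_of_nonneg_left (by linarith) (sub_nonneg.2 hp.1)
  have hmid : (q - p) * (h + h) ≤ (q - p) * (f p + f q) :=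
    mul_le_mul_of_nonneg_left (add_le_add hhp hhq) (sub_nonneg.2 hpq)
  have hright : (b - q) * h ≤ (b - q) * (f q + f b) :=
    mul_le_mul_of_nonneg_left (by linarith) (sub_nonneg.2 hq.2)
  rw [abs_of_nonneg (sub_nonneg.2 hpq),
    ← intervalIntegral.integral_add_adjacent_intervals (hint le_rfl hp.1 hp.2)
      (hint hp.1 hp.2 le_rfl),
    ← intervalIntegral.integral_add_adjacent_intervals (hint hp.1 hpq hq.2)
      (hint hq.1 hq.2 le_rfl)]
  linarith [htrap le_rfl hp.1 hp.2, htrap hp.1 hpq hq.2, htrap hq.1 hq.2 le_rfl]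

end Interval

section Differentiability

variable {E F : Type*} [NormedAddCommGroup E] [NormedSpace ℝ E] [FiniteDimensional ℝ E]
  [MeasurableSpace E] [BorelSpace E] [NormedAddCommGroup F] [NormedSpace ℝ F]
  [FiniteDimensional ℝ F] {μ : Measure E} [μ.IsAddHaarMeasure] {s : Set E}

lemma ae_differentiableAt_of_locallyLipschitzOn {f : E → F} (hs : IsOpen s)
    (hf : LocallyLipschitzOn s f) : ∀ᵐ z ∂μ, z ∈ s → DifferentiableAt ℝ f z := by
  refine measure_null_of_locally_null _ fun z hz => ?_
  have hzs : z ∈ s := (Classical.not_imp.1 hz).1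
  obtain ⟨K, t, ht, hK⟩ := hf hzs
  rw [hs.nhdsWithin_eq hzs] at ht
  refine ⟨_, inter_mem_nhdsWithin _ (interior_mem_nhds.2 ht),
    measure_mono_null ?_ hK.ae_differentiableWithinAt_of_mem⟩
  rintro w ⟨hw, hwt⟩
  exact fun hd => hw fun _ =>
    (hd (interior_subset hwt)).differentiableAt (mem_interior_iff_mem_nhds.1 hwt)

lemma ae_mem_interior_of_convex (hs : Convex ℝ s) : ∀ᵐ z ∂μ, z ∈ s → z ∈ interior s := by
  filter_upwards [measure_eq_zero_iff_ae_notMem.1 (hs.addHaar_frontier μ)] with z hz hzs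
  by_contra hzi
  exact hz ⟨subset_closure hzs, hzi⟩

lemma ae_differentiableAt_of_concaveOn {f : E → ℝ} (hf : ConcaveOn ℝ s f) :
    ∀ᵐ z ∂μ, z ∈ s → DifferentiableAt ℝ f z := by
  filter_upwards [ae_mem_interior_of_convex hf.1,
    ae_differentiableAt_of_locallyLipschitzOn (μ := μ) isOpen_interior
      hf.locallyLipschitzOn_interior] with z hint hdiff hz
  exact hdiff (hint hz)

end Differentiability

section FiberSup

variable {E F G : Type*}

/-- The profile of `u` along `π`: the largest value of `u` on the part of the fibre of `π` over `x`
that lies in `Ω`. It is `0` outside `π '' Ω`, because `sSup ∅ = 0`. -/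
noncomputable def fiberSup (π : E → F) (Ω : Set E) (u : E → ℝ) (x : F) : ℝ :=
  sSup (u '' (Ω ∩ π ⁻¹' {x}))

variable {π : E → F} {Ω : Set E} {u : E → ℝ}

lemma fiberSup_eq_zero_of_notMem_image {x : F} (hx : x ∉ π '' Ω) : fiberSup π Ω u x = 0 := by
  have hempty : Ω ∩ π ⁻¹' {x} = ∅ :=
    eq_empty_of_forall_notMem fun z hz => hx ⟨z, hz.1, hz.2⟩
  rw [fiberSup, hempty, image_empty, Real.sSup_empty]

lemma le_fiberSup (hu : BddAbove (u '' Ω)) {z : E} (hz : z ∈ Ω) : u z ≤ fiberSup π Ω u (π z) :=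
  le_csSup (hu.mono (image_mono inter_subset_left)) (mem_image_of_mem u ⟨hz, rfl⟩)

lemma fiberSup_le {x : F} {h : ℝ} (hx : x ∈ π '' Ω) (hle : ∀ z ∈ Ω, π z = x → u z ≤ h) :
    fiberSup π Ω u x ≤ h := by
  obtain ⟨z, hz, hzx⟩ := hx
  refine csSup_le ⟨u z, z, ⟨hz, hzx⟩, rfl⟩ ?_
  rintro _ ⟨w, hw, rfl⟩
  exact hle w hw.1 hw.2

lemma fiberSup_comp_equiv (e : G ≃ E) :
    fiberSup (π ∘ e) (e ⁻¹' Ω) (u ∘ e) = fiberSup π Ω u := by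
  funext x
  rw [fiberSup, fiberSup, image_comp, preimage_comp, ← preimage_inter, e.image_preimage]

open scoped Pointwise in
lemma concaveOn_fiberSup [AddCommGroup E] [Module ℝ E] [AddCommGroup F] [Module ℝ F]
    {π : E →ₗ[ℝ] F} (hu : ConcaveOn ℝ Ω u) (hbdd : BddAbove (u '' Ω)) :
    ConcaveOn ℝ (π '' Ω) (fiberSup π Ω u) := by
  refine ⟨hu.1.linear_image π, fun x hx y hy s t hs ht hst => ?_⟩
  have hcomb {z w : E} (hz : z ∈ Ω) (hw : w ∈ Ω) (hzx : π z = x) (hwy : π w = y) :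
      s * u z + t * u w ≤ fiberSup π Ω u (s • x + t • y) := by
    have h := le_fiberSup (π := π) hbdd (hu.1 hz hw hs ht hst)
    rw [map_add, map_smul, map_smul, hzx, hwy] at h
    exact (hu.2 hz hw hs ht hst).trans h
  have hne {y : F} (hy : y ∈ π '' Ω) : (u '' (Ω ∩ π ⁻¹' {y})).Nonempty := by
    obtain ⟨z, hz, hzy⟩ := hy
    exact ⟨u z, z, ⟨hz, hzy⟩, rfl⟩
  have hb (y : F) : BddAbove (u '' (Ω ∩ π ⁻¹' {y})) := hbdd.mono (image_mono inter_subset_left)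
  calc s • fiberSup π Ω u x + t • fiberSup π Ω u y
      = sSup (s • u '' (Ω ∩ π ⁻¹' {x}) + t • u '' (Ω ∩ π ⁻¹' {y})) := by
        rw [csSup_add ((hne hx).smul_set) ((hb x).smul_of_nonneg hs) ((hne hy).smul_set)
          ((hb y).smul_of_nonneg ht), Real.sSup_smul_of_nonneg hs, Real.sSup_smul_of_nonneg ht]
        rfl
    _ ≤ fiberSup π Ω u (s • x + t • y) := by
        refine csSup_le ((hne hx).smul_set.add (hne hy).smul_set) ?_
        rintro _ ⟨_, ⟨_, ⟨z, hz, rfl⟩, rfl⟩, _, ⟨_, ⟨w, hw, rfl⟩, rfl⟩, rfl⟩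
        exact hcomb hz.1 hw.1 hz.2 hw.2

section RealTarget

variable {π : E → ℝ} {a b : ℝ}

lemma integral_fiberSup_eq_intervalIntegral (hab : a ≤ b) (hπ : π '' Ω = Icc a b) :
    ∫ x, fiberSup π Ω u x = ∫ x in a..b, fiberSup π Ω u x := by
  rw [intervalIntegral.integral_of_le hab, ← integral_Icc_eq_integral_Ioc,
    setIntegral_eq_integral_of_forall_compl_eq_zero]
  exact fun x hx => fiberSup_eq_zero_of_notMem_image (hπ ▸ hx)

lemma intervalIntegral_fiberSup_le {p q : ℝ} {g : ℝ → ℝ} (hpq : p ≤ q)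
    (hsub : Icc p q ⊆ π '' Ω) (hi : IntervalIntegrable (fiberSup π Ω u) volume p q)
    (hg : IntervalIntegrable g volume p q) (hle : ∀ z ∈ Ω, π z ∈ Icc p q → u z ≤ g (π z)) :
    ∫ x in p..q, fiberSup π Ω u x ≤ ∫ x in p..q, g x := by
  refine intervalIntegral.integral_mono_on hpq hi hg fun x hx => fiberSup_le (hsub hx) ?_
  rintro z hz rfl
  exact hle z hz hx

lemma mul_add_abs_sub_le_two_mul_integral_fiberSup [AddCommGroup E] [Module ℝ E]
    {π : E →ₗ[ℝ] ℝ} (hu : ConcaveOn ℝ Ω u) (hbdd : BddAbove (u '' Ω)) (hu0 : ∀ z ∈ Ω, 0 ≤ u z)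
    (hi : Integrable (fiberSup π Ω u)) (hπ : π '' Ω = Icc a b) {P Q : E} (hP : P ∈ Ω) (hQ : Q ∈ Ω)
    {h : ℝ} (hhP : h ≤ u P) (hhQ : h ≤ u Q) :
    h * ((b - a) + |π Q - π P|) ≤ 2 * ∫ x, fiberSup π Ω u x := by
  have hmem {z : E} (hz : z ∈ Ω) : π z ∈ Icc a b := hπ ▸ mem_image_of_mem π hz
  have hab : a ≤ b := (hmem hP).1.trans (hmem hP).2
  have hnonneg : ∀ x ∈ Icc a b, 0 ≤ fiberSup π Ω u x := by
    rw [← hπ]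
    rintro _ ⟨z, hz, rfl⟩
    exact (hu0 z hz).trans (le_fiberSup hbdd hz)
  rw [integral_fiberSup_eq_intervalIntegral hab hπ]
  exact mul_add_abs_sub_le_two_mul_integral_of_concaveOn (hπ ▸ concaveOn_fiberSup hu hbdd)
    hi.intervalIntegrable (hnonneg a (left_mem_Icc.2 hab)) (hnonneg b (right_mem_Icc.2 hab))
    (hmem hP) (hmem hQ) (hhP.trans (le_fiberSup hbdd hP)) (hhQ.trans (le_fiberSup hbdd hQ))

lemma integral_fiberSup_le_of_strips (hi : Integrable (fiberSup π Ω u)) (hπ : π '' Ω = Icc a b)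
    {p A B : ℝ} (hp : p ∈ Icc a b) (hA : ∀ z ∈ Ω, π z ≤ p → u z ≤ A)
    (hB : ∀ z ∈ Ω, p ≤ π z → u z ≤ B) :
    ∫ x, fiberSup π Ω u x ≤ (p - a) * A + (b - p) * B := by
  have hleft := intervalIntegral_fiberSup_le hp.1 (hπ ▸ Icc_subset_Icc_right hp.2)
    hi.intervalIntegrable (intervalIntegrable_const (c := A)) fun z hz hzp => hA z hz hzp.2
  have hright := intervalIntegral_fiberSup_le hp.2 (hπ ▸ Icc_subset_Icc_left hp.1)
    hi.intervalIntegrable (intervalIntegrable_const (c := B)) fun z hz hzp => hB z hz hzp.1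
  rw [intervalIntegral.integral_const, smul_eq_mul] at hleft hright
  rw [integral_fiberSup_eq_intervalIntegral (hp.1.trans hp.2) hπ,
    ← intervalIntegral.integral_add_adjacent_intervals hi.intervalIntegrable hi.intervalIntegrable]
  exact add_le_add hleft hright

end RealTarget

end FiberSup

section Slices

/-- The line `t ↦ (x, t)` of the plane. -/
noncomputable def verticalLine (x : ℝ) : ℝ →ᵃ[ℝ] ℝ × ℝ :=
  (AffineMap.const ℝ ℝ x).prod (AffineMap.id ℝ ℝ)

lemma continuous_verticalLine (x : ℝ) : Continuous (verticalLine x) :=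
  Continuous.prodMk_right x

lemma exists_preimage_eq_Icc_of_convex {E : Type*} [AddCommGroup E] [Module ℝ E]
    [TopologicalSpace E] {Ω : Set E} (hΩ : Convex ℝ Ω) {L : ℝ →ᵃ[ℝ] E} (hL : Continuous L)
    (hcomp : IsCompact (L ⁻¹' Ω)) (hne : (L ⁻¹' Ω).Nonempty) :
    ∃ α β, α ≤ β ∧ L ⁻¹' Ω = Icc α β ∧ L α ∈ frontier Ω ∧ L β ∈ frontier Ω := by
  have hIcc := eq_Icc_of_connected_compact
    ⟨hne, (hΩ.affine_preimage L).isPreconnected⟩ hcomp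
  have hle : sInf (L ⁻¹' Ω) ≤ sSup (L ⁻¹' Ω) :=
    csInf_le_csSup hne hcomp.bddBelow hcomp.bddAbove
  have hfr : {sInf (L ⁻¹' Ω), sSup (L ⁻¹' Ω)} ⊆ L ⁻¹' frontier Ω := by
    refine Subset.trans ?_ (hL.frontier_preimage_subset Ω)
    nth_rw 3 [hIcc]
    rw [frontier_Icc hle]
  exact ⟨_, _, hle, hIcc, hfr (mem_insert _ _), hfr (mem_insert_of_mem _ rfl)⟩

lemma exists_verticalLine_preimage_eq_Icc {Ω : Set (ℝ × ℝ)} (hΩc : IsCompact Ω)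
    (hΩ : Convex ℝ Ω) {z : ℝ × ℝ} (hz : z ∈ Ω) :
    ∃ α β, α ≤ β ∧ verticalLine z.1 ⁻¹' Ω = Icc α β ∧
      verticalLine z.1 α ∈ frontier Ω ∧ verticalLine z.1 β ∈ frontier Ω :=
  exists_preimage_eq_Icc_of_convex hΩ (continuous_verticalLine z.1)
    ((hΩc.image continuous_snd).of_isClosed_subset
      (hΩc.isClosed.preimage (continuous_verticalLine z.1)) fun _ ht => ⟨_, ht, rfl⟩)
    ⟨z.2, hz⟩

end Slices

namespace MemU

variable {Ω : Set (ℝ × ℝ)} {u : ℝ × ℝ → ℝ}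

lemma bddAbove_image (hu : MemU Ω u) (hΩ : IsCompact Ω) : BddAbove (u '' Ω) :=
  hΩ.bddAbove_image hu.1

lemma nonneg (hu : MemU Ω u) (hΩ : IsCompact Ω) {z : ℝ × ℝ} (hz : z ∈ Ω) : 0 ≤ u z := by
  obtain ⟨α, β, hαβ, hpre, hα, hβ⟩ := exists_verticalLine_preimage_eq_Icc hΩ hu.2.1.1 hz
  have hconc := hpre ▸ hu.2.1.comp_affineMap (verticalLine z.1)
  have hz2 : z.2 ∈ Icc α β := hpre ▸ hz
  have hmin := hconc.min_le_of_mem_Icc (left_mem_Icc.2 hαβ) (right_mem_Icc.2 hαβ) hz2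
  simp only [Function.comp_apply, hu.2.2.1 _ hα, hu.2.2.1 _ hβ, min_self] at hmin
  exact hmin

lemma ae_norm_fderiv_le (hu : MemU Ω u) :
    ∃ C, ∀ᵐ z, z ∈ Ω → ‖fderiv ℝ u z‖ ≤ C := by
  obtain ⟨C, hC⟩ := hu.2.2.2
  refine ⟨C, ?_⟩
  filter_upwards [ae_mem_interior_of_convex (μ := (volume : Measure (ℝ × ℝ))) hu.2.1.1,
    ae_differentiableAt_of_concaveOn (μ := (volume : Measure (ℝ × ℝ))) hu.2.1] with z hint hdiff hz
  exact hC z (hint hz) _ (hdiff hz).hasFDerivAt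

lemma integrable_indicator_abs_uy (hu : MemU Ω u) (hΩ : IsCompact Ω) :
    Integrable (Ω.indicator fun z => |uy u z|) := by
  obtain ⟨C, hC⟩ := hu.ae_norm_fderiv_le
  rw [integrable_indicator_iff hΩ.measurableSet]
  refine Measure.integrableOn_of_bounded (M := C * ‖((0, 1) : ℝ × ℝ)‖) hΩ.measure_ne_top
    (measurable_fderiv_apply_const ℝ u (0, 1)).abs.aestronglyMeasurable ?_
  rw [ae_restrict_iff' hΩ.measurableSet]
  filter_upwards [hC] with z hz hzΩ
  rw [norm_abs_eq_norm]
  exact (fderiv ℝ u z).le_of_opNorm_le (hz hzΩ) _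

lemma uy_eq_derivWithin_verticalLine {x t : ℝ} (hd : DifferentiableAt ℝ u (x, t)) :
    uy u (x, t) = derivWithin (u ∘ verticalLine x) (Ioi t) t := by
  have hline : HasDerivAt (verticalLine x) ((0, 1) : ℝ × ℝ) t :=
    (hasDerivAt_const t x).prodMk (hasDerivAt_id t)
  have hcomp : HasDerivAt (u ∘ verticalLine x) (uy u (x, t)) t :=
    HasFDerivAt.comp_hasDerivAt t hd.hasFDerivAt hline
  exact (hcomp.hasDerivWithinAt.derivWithin (uniqueDiffWithinAt_Ioi t)).symm

lemma integral_verticalLine_abs_uy (hu : MemU Ω u) (hΩ : IsCompact Ω) {x : ℝ}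
    (hx : x ∈ Prod.fst '' Ω) (hdiff : ∀ᵐ t, (x, t) ∈ Ω → DifferentiableAt ℝ u (x, t)) :
    ∫ t, Ω.indicator (fun z => |uy u z|) (x, t) = 2 * fiberSup Prod.fst Ω u x := by
  obtain ⟨z, hz, rfl⟩ := hx
  obtain ⟨α, β, hαβ, hpre, hα, hβ⟩ := exists_verticalLine_preimage_eq_Icc hΩ hu.2.1.1 hz
  set f := u ∘ verticalLine z.1 with hf
  have hmem (t : ℝ) : (z.1, t) ∈ Ω ↔ t ∈ Icc α β := by rw [← hpre]; rfl
  have hcont : ContinuousOn f (Icc α β) :=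
    hu.1.comp (continuous_verticalLine z.1).continuousOn fun t ht => (hmem t).2 ht
  obtain ⟨m, hm, hmax⟩ := isCompact_Icc.exists_isMaxOn (nonempty_Icc.2 hαβ) hcont
  have hsup : fiberSup Prod.fst Ω u z.1 = f m := by
    refine IsGreatest.csSup_eq ⟨⟨(z.1, m), ⟨(hmem m).2 hm, rfl⟩, rfl⟩, ?_⟩
    rintro _ ⟨⟨_, t⟩, ⟨ht, rfl⟩, rfl⟩
    exact hmax ((hmem t).1 ht)
  have hderiv : ∀ᵐ t, Ω.indicator (fun z => |uy u z|) (z.1, t) =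
      (Icc α β).indicator (fun t => |derivWithin f (Ioi t) t|) t := by
    filter_upwards [hdiff] with t ht
    by_cases htΩ : t ∈ Icc α β
    · rw [indicator_of_mem htΩ, indicator_of_mem ((hmem t).2 htΩ),
        uy_eq_derivWithin_verticalLine (ht ((hmem t).2 htΩ))]
    · rw [indicator_of_notMem htΩ, indicator_of_notMem (mt (hmem t).1 htΩ)]
  rw [integral_congr_ae hderiv, integral_indicator measurableSet_Icc,
    integral_Icc_eq_integral_Ioc, ← intervalIntegral.integral_of_le hαβ,
    integral_abs_derivWithin_Ioi_of_concaveOn hcont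
      (hpre ▸ hu.2.1.comp_affineMap (verticalLine z.1)) hm hmax, hsup]
  simp only [hf, Function.comp_apply, hu.2.2.1 _ hα, hu.2.2.1 _ hβ, sub_zero]

lemma ae_integral_verticalLine_abs_uy (hu : MemU Ω u) (hΩ : IsCompact Ω) :
    ∀ᵐ x, ∫ t, Ω.indicator (fun z => |uy u z|) (x, t) = 2 * fiberSup Prod.fst Ω u x := by
  have hdiff : ∀ᵐ z, z ∈ Ω → DifferentiableAt ℝ u z := ae_differentiableAt_of_concaveOn hu.2.1
  rw [Measure.volume_eq_prod] at hdiff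
  filter_upwards [Measure.ae_ae_of_ae_prod hdiff] with x hx
  by_cases hxΩ : x ∈ Prod.fst '' Ω
  · exact hu.integral_verticalLine_abs_uy hΩ hxΩ hx
  · have hout (t : ℝ) : (x, t) ∉ Ω := fun ht => hxΩ ⟨(x, t), ht, rfl⟩
    simp only [indicator_of_notMem (hout _), integral_zero,
      fiberSup_eq_zero_of_notMem_image hxΩ, mul_zero]

lemma integrable_fiberSup_fst (hu : MemU Ω u) (hΩ : IsCompact Ω) :
    Integrable (fiberSup Prod.fst Ω u) := by
  have h := (hu.integrable_indicator_abs_uy hΩ).integral_prod_left.congr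
    (hu.ae_integral_verticalLine_abs_uy hΩ)
  exact (integrable_const_mul_iff (isUnit_iff_ne_zero.2 two_ne_zero) _).1 h

lemma L1N_uy_eq (hu : MemU Ω u) (hΩ : IsCompact Ω) :
    L1N Ω (uy u) = 2 * ∫ x, fiberSup Prod.fst Ω u x := by
  rw [L1N, ← integral_indicator hΩ.measurableSet, Measure.volume_eq_prod,
    integral_prod _ (hu.integrable_indicator_abs_uy hΩ),
    integral_congr_ae (hu.ae_integral_verticalLine_abs_uy hΩ), integral_const_mul]

lemma comp_continuousLinearEquiv (hu : MemU Ω u) (e : (ℝ × ℝ) ≃L[ℝ] ℝ × ℝ) :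
    MemU (e ⁻¹' Ω) (u ∘ e) := by
  obtain ⟨hc, hconc, hfr, C, hC⟩ := hu
  refine ⟨hc.comp e.continuous.continuousOn fun z hz => hz,
    hconc.comp_linearMap (e : (ℝ × ℝ) →ₗ[ℝ] (ℝ × ℝ)), fun z hz => hfr _ ?_,
    C * ‖(e : (ℝ × ℝ) →L[ℝ] (ℝ × ℝ))‖, fun z hz g hg => ?_⟩
  · rwa [← e.coe_toHomeomorph, ← e.toHomeomorph.preimage_frontier] at hz
  · rw [← e.coe_toHomeomorph, ← e.toHomeomorph.preimage_interior] at hz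
    have hg_eq : g = (g ∘L (e.symm : ℝ × ℝ →L[ℝ] ℝ × ℝ)) ∘L (e : ℝ × ℝ →L[ℝ] ℝ × ℝ) := by
      ext <;> simp
    rw [hg_eq]
    refine (ContinuousLinearMap.opNorm_comp_le _ _).trans ?_
    gcongr
    exact hC _ hz _ (e.comp_right_hasFDerivAt_iff'.1 hg)

end MemU

section Swap

variable {Ω : Set (ℝ × ℝ)} {u : ℝ × ℝ → ℝ}

lemma uy_comp_swap (u : ℝ × ℝ → ℝ) (z : ℝ × ℝ) : uy (u ∘ Prod.swap) z = ux u z.swap :=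
  DFunLike.congr_fun ((ContinuousLinearEquiv.prodComm ℝ ℝ ℝ).comp_right_fderiv (f := u) (x := z))
    (0, 1)

lemma L1N_ux_eq_L1N_uy_comp_swap (Ω : Set (ℝ × ℝ)) (u : ℝ × ℝ → ℝ) :
    L1N Ω (ux u) = L1N (Prod.swap ⁻¹' Ω) (uy (u ∘ Prod.swap)) := by
  simp only [L1N, uy_comp_swap]
  exact (Measure.measurePreserving_swap.setIntegral_preimage_emb
    MeasurableEquiv.prodComm.measurableEmbedding (fun z => |ux u z|) Ω).symm

lemma fiberSup_fst_comp_swap (Ω : Set (ℝ × ℝ)) (u : ℝ × ℝ → ℝ) :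
    fiberSup Prod.fst (Prod.swap ⁻¹' Ω) (u ∘ Prod.swap) = fiberSup Prod.snd Ω u :=
  fiberSup_comp_equiv (π := Prod.snd) (Equiv.prodComm ℝ ℝ)

end Swap

namespace MemU

variable {Ω : Set (ℝ × ℝ)} {u : ℝ × ℝ → ℝ} {a b c d h : ℝ} {P Q : ℝ × ℝ}

lemma comp_swap (hu : MemU Ω u) : MemU (Prod.swap ⁻¹' Ω) (u ∘ Prod.swap) :=
  hu.comp_continuousLinearEquiv (ContinuousLinearEquiv.prodComm ℝ ℝ ℝ)

lemma integrable_fiberSup_snd (hu : MemU Ω u) (hΩ : IsCompact Ω) :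
    Integrable (fiberSup Prod.snd Ω u) :=
  fiberSup_fst_comp_swap Ω u ▸
    hu.comp_swap.integrable_fiberSup_fst ((Homeomorph.prodComm ℝ ℝ).isCompact_preimage.2 hΩ)

lemma L1N_ux_eq (hu : MemU Ω u) (hΩ : IsCompact Ω) :
    L1N Ω (ux u) = 2 * ∫ y, fiberSup Prod.snd Ω u y := by
  rw [L1N_ux_eq_L1N_uy_comp_swap,
    hu.comp_swap.L1N_uy_eq ((Homeomorph.prodComm ℝ ℝ).isCompact_preimage.2 hΩ),
    fiberSup_fst_comp_swap]

lemma le_L1N_uy (hu : MemU Ω u) (hΩ : IsCompact Ω) (hx : Prod.fst '' Ω = Icc a b) (hP : P ∈ Ω)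
    (hQ : Q ∈ Ω) (hhP : h ≤ u P) (hhQ : h ≤ u Q) :
    h * ((b - a) + |Q.1 - P.1|) ≤ L1N Ω (uy u) := by
  rw [hu.L1N_uy_eq hΩ]
  exact mul_add_abs_sub_le_two_mul_integral_fiberSup (π := LinearMap.fst ℝ ℝ ℝ) hu.2.1
    (hu.bddAbove_image hΩ) (fun z => hu.nonneg hΩ) (hu.integrable_fiberSup_fst hΩ) hx hP hQ hhP hhQ

lemma le_L1N_ux (hu : MemU Ω u) (hΩ : IsCompact Ω) (hy : Prod.snd '' Ω = Icc c d) (hP : P ∈ Ω)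
    (hQ : Q ∈ Ω) (hhP : h ≤ u P) (hhQ : h ≤ u Q) :
    h * ((d - c) + |Q.2 - P.2|) ≤ L1N Ω (ux u) := by
  rw [hu.L1N_ux_eq hΩ]
  exact mul_add_abs_sub_le_two_mul_integral_fiberSup (π := LinearMap.snd ℝ ℝ ℝ) hu.2.1
    (hu.bddAbove_image hΩ) (fun z => hu.nonneg hΩ) (hu.integrable_fiberSup_snd hΩ) hy hP hQ hhP hhQ

lemma L1N_ux_le_of_strips (hu : MemU Ω u) (hΩ : IsCompact Ω) (hy : Prod.snd '' Ω = Icc c d)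
    {p A B : ℝ} (hp : p ∈ Icc c d) (hA : ∀ z ∈ Ω, z.2 ≤ p → u z ≤ A)
    (hB : ∀ z ∈ Ω, p ≤ z.2 → u z ≤ B) :
    L1N Ω (ux u) ≤ 2 * ((p - c) * A + (d - p) * B) := by
  rw [hu.L1N_ux_eq hΩ]
  exact mul_le_mul_of_nonneg_left
    (integral_fiberSup_le_of_strips (hu.integrable_fiberSup_snd hΩ) hy hp hA hB) zero_le_two

lemma exists_isMaxOn_pos (hu : MemU Ω u) (hΩ : IsCompact Ω) (hne : ∃ z ∈ Ω, u z ≠ 0) :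
    ∃ P ∈ Ω, 0 < u P ∧ IsMaxOn u Ω P := by
  obtain ⟨z, hz, hz0⟩ := hne
  obtain ⟨P, hP, hmax⟩ := hΩ.exists_isMaxOn ⟨z, hz⟩ hu.1
  exact ⟨P, hP, ((hu.nonneg hΩ hz).lt_of_ne' hz0).trans_le (hmax hz), hmax⟩

/-- Comparing `‖u_x‖₁` with a step function of the ordinate and `‖u_y‖₁` with a trapezoid. -/
lemma L1N_ux_div_L1N_uy_le (hu : MemU Ω u) (hΩ : IsCompact Ω) (hab : a < b)
    (hx : Prod.fst '' Ω = Icc a b) (hy : Prod.snd '' Ω = Icc c d) {M p α β γ : ℝ} (hM : 0 < M)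
    (hγ : 0 < γ) (hp : p ∈ Icc c d) (hα : ∀ z ∈ Ω, z.2 ≤ p → u z ≤ α * M)
    (hβ : ∀ z ∈ Ω, p ≤ z.2 → u z ≤ β * M) (hP : P ∈ Ω) (hQ : Q ∈ Ω) (hγP : γ * M ≤ u P)
    (hγQ : γ * M ≤ u Q) :
    L1N Ω (ux u) / L1N Ω (uy u) ≤
      2 * ((p - c) * α + (d - p) * β) / (γ * ((b - a) + |Q.1 - P.1|)) := by
  have hupper := hu.L1N_ux_le_of_strips hΩ hy hp hα hβ
  have hlower := hu.le_L1N_uy hΩ hx hP hQ hγP hγQ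
  have hlen : 0 < (b - a) + |Q.1 - P.1| := add_pos_of_pos_of_nonneg (sub_pos.2 hab) (abs_nonneg _)
  have hux : 0 ≤ L1N Ω (ux u) := integral_nonneg fun _ => abs_nonneg _
  calc L1N Ω (ux u) / L1N Ω (uy u)
      ≤ 2 * ((p - c) * (α * M) + (d - p) * (β * M)) / (γ * M * ((b - a) + |Q.1 - P.1|)) :=
        div_le_div₀ (hux.trans hupper) hupper (by positivity) hlower
    _ = 2 * ((p - c) * α + (d - p) * β) / (γ * ((b - a) + |Q.1 - P.1|)) := by
        field_simp

lemma L1N_ux_div_L1N_uy_le_two_mul (hu : MemU Ω u) (hΩ : IsCompact Ω)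
    (hne : ∃ z ∈ Ω, u z ≠ 0) (hab : a < b) (hx : Prod.fst '' Ω = Icc a b)
    (hy : Prod.snd '' Ω = Icc c d) :
    L1N Ω (ux u) / L1N Ω (uy u) ≤ 2 * ((d - c) / (b - a)) := by
  obtain ⟨P, hP, hpos, hmax⟩ := hu.exists_isMaxOn_pos hΩ hne
  have hle : ∀ z ∈ Ω, u z ≤ 1 * u P := fun z hz => (hmax hz).trans_eq (one_mul _).symm
  have hPy : P.2 ∈ Icc c d := hy ▸ mem_image_of_mem _ hP
  refine (hu.L1N_ux_div_L1N_uy_le hΩ hab hx hy hpos one_pos hPy (fun z hz _ => hle z hz)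
    (fun z hz _ => hle z hz) hP hP (one_mul _).le (one_mul _).le).trans_eq ?_
  rw [sub_self, abs_zero]
  ring

end MemU

section NoVerticalSegment

variable {Ω : Set (ℝ × ℝ)} {a b c d : ℝ}

lemma exists_forall_le_abs_fst_sub (hΩ : IsCompact Ω) (hΩconv : Convex ℝ Ω) (hcd : c < d)
    (hy : Prod.snd '' Ω = Icc c d) (hseg : ¬ ∃ x₀ : ℝ, segment ℝ (x₀, c) (x₀, d) ⊆ Ω) :
    ∃ ε ∈ Ioc 0 (d - c), ∃ δ > 0, ∀ z ∈ Ω, ∀ w ∈ Ω,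
      d - ε ≤ z.2 → w.2 ≤ c + ε → δ ≤ |z.1 - w.1| := by
  have hmem {z : ℝ × ℝ} (hz : z ∈ Ω) : z.2 ∈ Icc c d := hy ▸ mem_image_of_mem _ hz
  have hne : Ω.Nonempty := image_nonempty.1 (hy ▸ nonempty_Icc.2 hcd.le)
  obtain ⟨⟨z₀, w₀⟩, ⟨hz₀, hw₀⟩, hmin⟩ := (hΩ.prod hΩ).exists_isMinOn (hne.prod hne)
    (f := fun p => (d - p.1.2) + (p.2.2 - c) + |p.1.1 - p.2.1|) (by fun_prop)
  set m := (d - z₀.2) + (w₀.2 - c) + |z₀.1 - w₀.1| with hm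
  have hle {z w : ℝ × ℝ} (hz : z ∈ Ω) (hw : w ∈ Ω) : m ≤ (d - z.2) + (w.2 - c) + |z.1 - w.1| :=
    hmin (mk_mem_prod hz hw)
  have hmpos : 0 < m := by
    have hz₀d := (hmem hz₀).2
    have hw₀c := (hmem hw₀).1
    have habs := abs_nonneg (z₀.1 - w₀.1)
    by_contra hm0
    rw [hm] at hm0
    have hfst : z₀.1 = w₀.1 := sub_eq_zero.1 (abs_eq_zero.1 (by linarith))
    have hbot : w₀ = (z₀.1, c) := Prod.ext hfst.symm (by linarith)
    have htop : z₀ = (z₀.1, d) := Prod.ext rfl (by linarith)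
    exact hseg ⟨z₀.1, hΩconv.segment_subset (hbot ▸ hw₀) (htop ▸ hz₀)⟩
  refine ⟨min (m / 4) (d - c), ⟨lt_min (by positivity) (sub_pos.2 hcd), min_le_right _ _⟩,
    m / 2, by positivity, fun z hz w hw hzd hwc => ?_⟩
  linarith [hle hz hw, min_le_left (m / 4) (d - c)]

/-- If `u` is at most `η * max u` on the top strip or on the bottom strip, this improves the upper
bound for `‖u_x‖₁`; otherwise `u` is large at two points whose abscissae are `δ` apart, which
improves the lower bound for `‖u_y‖₁`. -/
lemma MemU.L1N_ux_div_L1N_uy_le_max {u : ℝ × ℝ → ℝ} (hu : MemU Ω u) (hΩ : IsCompact Ω)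
    (hne : ∃ z ∈ Ω, u z ≠ 0) (hab : a < b) (hx : Prod.fst '' Ω = Icc a b)
    (hy : Prod.snd '' Ω = Icc c d) {ε δ η : ℝ} (hε : ε ∈ Icc 0 (d - c)) (hδ : 0 ≤ δ)
    (hη : 0 < η)
    (hfar : ∀ z ∈ Ω, ∀ w ∈ Ω, d - ε ≤ z.2 → w.2 ≤ c + ε → δ ≤ |z.1 - w.1|) :
    L1N Ω (ux u) / L1N Ω (uy u) ≤
      max (2 * (d - c) / (η * ((b - a) + δ))) (2 * (d - c - ε * (1 - η)) / (b - a)) := by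
  obtain ⟨P, hP, hpos, hmax⟩ := hu.exists_isMaxOn_pos hΩ hne
  have hle : ∀ z ∈ Ω, u z ≤ 1 * u P := fun z hz => (hmax hz).trans_eq (one_mul _).symm
  by_cases htop : ∀ z ∈ Ω, d - ε ≤ z.2 → u z ≤ η * u P
  · refine le_max_of_le_right ((hu.L1N_ux_div_L1N_uy_le hΩ hab hx hy hpos one_pos
      (p := d - ε) ⟨by linarith [hε.2], by linarith [hε.1]⟩ (fun z hz _ => hle z hz) htop hP hP
      (one_mul _).le (one_mul _).le).trans_eq ?_)
    rw [sub_self, abs_zero]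
    ring
  by_cases hbot : ∀ z ∈ Ω, z.2 ≤ c + ε → u z ≤ η * u P
  · refine le_max_of_le_right ((hu.L1N_ux_div_L1N_uy_le hΩ hab hx hy hpos one_pos
      (p := c + ε) ⟨by linarith [hε.1], by linarith [hε.2]⟩ hbot (fun z hz _ => hle z hz) hP hP
      (one_mul _).le (one_mul _).le).trans_eq ?_)
    rw [sub_self, abs_zero]
    ring
  push Not at htop hbot
  obtain ⟨z, hz, hzd, hzu⟩ := htop
  obtain ⟨w, hw, hwc, hwu⟩ := hbot
  have hcd : 0 ≤ d - c := hε.1.trans hε.2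
  have : 0 < b - a := sub_pos.2 hab
  refine le_max_of_le_left ?_
  calc L1N Ω (ux u) / L1N Ω (uy u)
      ≤ 2 * ((c - c) * 1 + (d - c) * 1) / (η * ((b - a) + |z.1 - w.1|)) :=
        hu.L1N_ux_div_L1N_uy_le hΩ hab hx hy hpos hη (left_mem_Icc.2 (sub_nonneg.1 hcd))
          (fun v hv _ => hle v hv) (fun v hv _ => hle v hv) hw hz hwu.le hzu.le
    _ ≤ 2 * (d - c) / (η * ((b - a) + δ)) := by
        rw [sub_self, zero_mul, zero_add, mul_one]
        gcongr
        exact hfar z hz w hw hzd hwc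

lemma exists_lt_forall_L1N_ux_div_L1N_uy_le (hΩ : IsCompact Ω) (hΩconv : Convex ℝ Ω)
    (hab : a < b) (hcd : c < d) (hx : Prod.fst '' Ω = Icc a b) (hy : Prod.snd '' Ω = Icc c d)
    (hseg : ¬ ∃ x₀ : ℝ, segment ℝ (x₀, c) (x₀, d) ⊆ Ω) :
    ∃ K, 0 ≤ K ∧ K < 2 * ((d - c) / (b - a)) ∧ ∀ u, MemU Ω u → (∃ z ∈ Ω, u z ≠ 0) →
      L1N Ω (ux u) / L1N Ω (uy u) ≤ K := by
  obtain ⟨ε, hε, δ, hδ, hfar⟩ := exists_forall_le_abs_fst_sub hΩ hΩconv hcd hy hseg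
  have hba : 0 < b - a := sub_pos.2 hab
  have : 0 < d - c := sub_pos.2 hcd
  obtain ⟨η, hη, hη1⟩ := exists_between
    ((div_lt_one (add_pos hba hδ)).2 (lt_add_of_pos_right (b - a) hδ))
  have hηpos : 0 < η := (div_pos hba (add_pos hba hδ)).trans hη
  refine ⟨_, le_max_of_le_left (by positivity), ?_, fun u hu hne =>
    hu.L1N_ux_div_L1N_uy_le_max hΩ hne hab hx hy (Ioc_subset_Icc_self hε) hδ.le hηpos hfar⟩
  rw [← mul_div_assoc]
  refine max_lt (div_lt_div_of_pos_left (by positivity) hba ?_) (div_lt_div_of_pos_right ?_ hba)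
  · rwa [← div_lt_iff₀ (add_pos hba hδ)]
  · linarith [mul_pos hε.1 (sub_pos.2 hη1)]

end NoVerticalSegment

section Tent

variable {a b p : ℝ}

/-- The piecewise affine function with value `1` at `p` and `0` at `a` and `b`, where `a < p < b`;
dominating `u` by a tent over the first coordinate bounds `‖u_y‖₁`. -/
noncomputable def tent (a p b x : ℝ) : ℝ :=
  min ((x - a) / (p - a)) ((b - x) / (b - p))

lemma tent_peak (hp : p ∈ Ioo a b) : tent a p b p = 1 := by
  rw [tent, div_self (sub_pos.2 hp.1).ne', div_self (sub_pos.2 hp.2).ne', min_self]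

lemma tent_nonneg (hp : p ∈ Ioo a b) {x : ℝ} (hx : x ∈ Icc a b) : 0 ≤ tent a p b x :=
  le_min (div_nonneg (sub_nonneg.2 hx.1) (sub_pos.2 hp.1).le)
    (div_nonneg (sub_nonneg.2 hx.2) (sub_pos.2 hp.2).le)

lemma concaveOn_tent (a p b : ℝ) : ConcaveOn ℝ univ (tent a p b) := by
  refine ConcaveOn.inf ⟨convex_univ, fun x _ y _ s t _ _ hst => le_of_eq ?_⟩
    ⟨convex_univ, fun x _ y _ s t _ _ hst => le_of_eq ?_⟩ <;>
  simp only [smul_eq_mul]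
  · linear_combination (-(a / (p - a))) * hst
  · linear_combination (b / (b - p)) * hst

lemma exists_lipschitzWith_tent (a p b : ℝ) : ∃ K, LipschitzWith K (tent a p b) := by
  have hleft : LipschitzWith _ fun x : ℝ => (p - a)⁻¹ • (x - a) :=
    (lipschitzWith_smul _).comp (LipschitzWith.id.sub (LipschitzWith.const a))
  have hright : LipschitzWith _ fun x : ℝ => (b - p)⁻¹ • (b - x) :=
    (lipschitzWith_smul _).comp ((LipschitzWith.const b).sub LipschitzWith.id)
  simp only [smul_eq_mul, inv_mul_eq_div] at hleft hright
  exact ⟨_, hleft.min hright⟩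

lemma continuous_tent (a p b : ℝ) : Continuous (tent a p b) :=
  let ⟨_, hK⟩ := exists_lipschitzWith_tent a p b
  hK.continuous

lemma integral_tent_le (hp : p ∈ Ioo a b) : ∫ x in a..b, tent a p b x ≤ (b - a) / 2 := by
  have hpa : p - a ≠ 0 := (sub_pos.2 hp.1).ne'
  have hbp : b - p ≠ 0 := (sub_pos.2 hp.2).ne'
  have hi (s t : ℝ) : IntervalIntegrable (tent a p b) volume s t :=
    (continuous_tent a p b).intervalIntegrable s t
  calc ∫ x in a..b, tent a p b x
      = (∫ x in a..p, tent a p b x) + ∫ x in p..b, tent a p b x :=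
        (intervalIntegral.integral_add_adjacent_intervals (hi a p) (hi p b)).symm
    _ ≤ (∫ x in a..p, (x - a) / (p - a)) + ∫ x in p..b, (b - x) / (b - p) := by
        refine add_le_add (intervalIntegral.integral_mono hp.1.le (hi a p) ?_ fun x =>
          min_le_left _ _) (intervalIntegral.integral_mono hp.2.le (hi p b) ?_ fun x =>
          min_le_right _ _) <;>
        apply Continuous.intervalIntegrable <;> fun_prop
    _ = (b - a) / 2 := by
        rw [intervalIntegral.integral_div, intervalIntegral.integral_div,
          integral_sub_left_endpoint, integral_right_endpoint_sub]
        field_simp [hpa, hbp]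
        ring

lemma MemU.L1N_uy_le_of_le_tent {Ω : Set (ℝ × ℝ)} {u : ℝ × ℝ → ℝ} (hu : MemU Ω u)
    (hΩ : IsCompact Ω) (hx : Prod.fst '' Ω = Icc a b) (hp : p ∈ Ioo a b)
    (hle : ∀ z ∈ Ω, u z ≤ tent a p b z.1) : L1N Ω (uy u) ≤ b - a := by
  have hab : a ≤ b := (hp.1.trans hp.2).le
  have hprofile := intervalIntegral_fiberSup_le hab hx.ge
    (hu.integrable_fiberSup_fst hΩ).intervalIntegrable
    ((continuous_tent a p b).intervalIntegrable a b) fun z hz _ => hle z hz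
  rw [hu.L1N_uy_eq hΩ, integral_fiberSup_eq_intervalIntegral hab hx]
  linarith [integral_tent_le hp]

end Tent

section ConeFun

lemma preimage_add_right_mem_nhds_zero {E : Type*} [TopologicalSpace E] [AddMonoid E]
    [ContinuousAdd E] {Ω : Set E} {z₀ : E} (hz₀ : z₀ ∈ interior Ω) :
    (· + z₀) ⁻¹' Ω ∈ nhds (0 : E) :=
  (continuous_add_const z₀).continuousAt.preimage_mem_nhds <| by
    rwa [zero_add, ← mem_interior_iff_mem_nhds]

variable {E : Type*} [NormedAddCommGroup E] [NormedSpace ℝ E] {Ω : Set E} {z₀ : E}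

/-- The function whose graph over a convex set `Ω` is the cone with base `frontier Ω` and apex of
height `1` above the interior point `z₀`. -/
noncomputable def coneFun (Ω : Set E) (z₀ z : E) : ℝ :=
  1 - gauge ((· + z₀) ⁻¹' Ω) (z - z₀)

lemma concaveOn_coneFun (hΩ : Convex ℝ Ω) (hz₀ : z₀ ∈ interior Ω) :
    ConcaveOn ℝ univ (coneFun Ω z₀) := by
  refine ⟨convex_univ, fun z _ w _ s t hs ht hst => ?_⟩
  have hdecomp : s • z + t • w - z₀ = s • (z - z₀) + t • (w - z₀) := by
    rw [smul_sub, smul_sub, sub_add_sub_comm, ← add_smul, hst, one_smul]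
  have hadd := gauge_add_le (hΩ.translate_preimage_left z₀)
    (absorbent_nhds_zero (preimage_add_right_mem_nhds_zero hz₀)) (s • (z - z₀)) (t • (w - z₀))
  rw [gauge_smul_of_nonneg hs, gauge_smul_of_nonneg ht] at hadd
  simp only [coneFun, hdecomp, smul_eq_mul] at hadd ⊢
  linarith

lemma exists_lipschitzWith_coneFun (hΩ : Convex ℝ Ω) (hz₀ : z₀ ∈ interior Ω) :
    ∃ K, LipschitzWith K (coneFun Ω z₀) := by
  obtain ⟨K, hK⟩ := (hΩ.translate_preimage_left z₀).lipschitz_gauge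
    (preimage_add_right_mem_nhds_zero hz₀)
  exact ⟨_, (LipschitzWith.const 1).sub
    (hK.comp (LipschitzWith.id.sub (LipschitzWith.const z₀)))⟩

lemma coneFun_eq_zero_of_mem_frontier (hΩ : Convex ℝ Ω) (hz₀ : z₀ ∈ interior Ω) {z : E}
    (hz : z ∈ frontier Ω) : coneFun Ω z₀ z = 0 := by
  have hfr : z - z₀ ∈ frontier ((· + z₀) ⁻¹' Ω) := by
    rw [← Homeomorph.coe_addRight, ← (Homeomorph.addRight z₀).preimage_frontier]
    simpa only [mem_preimage, Homeomorph.coe_addRight, sub_add_cancel] using hz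
  rw [coneFun, (gauge_eq_one_iff_mem_frontier (hΩ.translate_preimage_left z₀)
    (preimage_add_right_mem_nhds_zero hz₀)).2 hfr, sub_self]

lemma le_coneFun_lineMap {z : E} (hz : z ∈ Ω) {t : ℝ} (ht : t ≤ 1) :
    t ≤ coneFun Ω z₀ (AffineMap.lineMap z z₀ t) := by
  have hz' : z - z₀ ∈ (· + z₀) ⁻¹' Ω := by rwa [mem_preimage, sub_add_cancel]
  have hdecomp : AffineMap.lineMap z z₀ t - z₀ = (1 - t) • (z - z₀) := by
    rw [AffineMap.lineMap_apply_module]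
    module
  rw [coneFun, hdecomp, gauge_smul_of_nonneg (sub_nonneg.2 ht), smul_eq_mul]
  linarith [mul_le_of_le_one_right (sub_nonneg.2 ht) (gauge_le_one_of_mem hz')]

end ConeFun

section VerticalSegment

variable {Ω : Set (ℝ × ℝ)} {a b c d : ℝ} {z₀ : ℝ × ℝ}

lemma memU_of_concaveOn_of_lipschitzWith {u : ℝ × ℝ → ℝ} {K : NNReal} (hu : ConcaveOn ℝ Ω u)
    (hK : LipschitzWith K u) (h0 : ∀ z ∈ frontier Ω, u z = 0) : MemU Ω u :=
  ⟨hK.continuous.continuousOn, hu, h0, K, fun _ _ _ hg => hg.le_of_lipschitz hK⟩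

/-- A tent over the abscissa, cut down to the boundary values `0` by a cone of height `t⁻¹`. -/
noncomputable def cutTent (Ω : Set (ℝ × ℝ)) (a p b : ℝ) (z₀ : ℝ × ℝ) (t : ℝ) (z : ℝ × ℝ) : ℝ :=
  min (tent a p b z.1) (t⁻¹ * coneFun Ω z₀ z)

lemma memU_cutTent (hΩ : IsCompact Ω) (hΩconv : Convex ℝ Ω) (hz₀ : z₀ ∈ interior Ω)
    (hx : Prod.fst '' Ω = Icc a b) {p t : ℝ} (hp : p ∈ Ioo a b) (ht : 0 < t) :
    MemU Ω (cutTent Ω a p b z₀ t) := by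
  obtain ⟨K, hK⟩ := exists_lipschitzWith_tent a p b
  obtain ⟨L, hL⟩ := exists_lipschitzWith_coneFun hΩconv hz₀
  have hconc : ConcaveOn ℝ univ (cutTent Ω a p b z₀ t) :=
    ((concaveOn_tent a p b).comp_linearMap (LinearMap.fst ℝ ℝ ℝ)).inf
      ((concaveOn_coneFun hΩconv hz₀).smul (inv_nonneg.2 ht.le))
  refine memU_of_concaveOn_of_lipschitzWith (hconc.subset (subset_univ Ω) hΩconv)
    ((hK.comp LipschitzWith.prod_fst).min ((lipschitzWith_smul t⁻¹).comp hL)) fun z hz => ?_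
  have hz1 : z.1 ∈ Icc a b := hx ▸ mem_image_of_mem _ (hΩ.isClosed.frontier_subset hz)
  rw [cutTent, coneFun_eq_zero_of_mem_frontier hΩconv hz₀ hz, mul_zero]
  exact min_eq_right (tent_nonneg hp hz1)

lemma one_le_cutTent_lineMap {z : ℝ × ℝ} (hz : z ∈ Ω) {t p : ℝ} (ht : t ∈ Ioc 0 1)
    (hp : p ∈ Ioo a b) (hzp : (AffineMap.lineMap z z₀ t).1 = p) :
    1 ≤ cutTent Ω a p b z₀ t (AffineMap.lineMap z z₀ t) := by
  refine le_min (hzp.symm ▸ (tent_peak hp).ge) ?_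
  rw [inv_mul_eq_div, one_le_div ht.1]
  exact le_coneFun_lineMap hz ht.2

lemma lineMap_mem_Ioo {x y t : ℝ} (hx : x ∈ Icc a b) (hy : y ∈ Ioo a b) (ht : t ∈ Ioc 0 1) :
    AffineMap.lineMap x y t ∈ Ioo a b := by
  rw [← interior_Icc] at hy ⊢
  rw [AffineMap.lineMap_apply_module]
  exact (convex_Icc a b).combo_self_interior_mem_interior hx hy (sub_nonneg.2 ht.2) ht.1
    (sub_add_cancel 1 t)

lemma abs_sub_lineMap_same_right (x y z : ℝ) {t : ℝ} (ht : t ≤ 1) :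
    |AffineMap.lineMap y z t - AffineMap.lineMap x z t| = (1 - t) * |y - x| := by
  rw [AffineMap.lineMap_apply_module, AffineMap.lineMap_apply_module, add_sub_add_right_eq_sub,
    ← smul_sub, smul_eq_mul, abs_mul, abs_of_nonneg (sub_nonneg.2 ht)]

lemma exists_memU_le_L1N_ux_div_L1N_uy (hΩ : IsCompact Ω) (hΩconv : Convex ℝ Ω)
    (hz₀ : z₀ ∈ interior Ω) (hz₀x : z₀.1 ∈ Ioo a b) (hx : Prod.fst '' Ω = Icc a b)
    (hy : Prod.snd '' Ω = Icc c d) {x₀ : ℝ} (hbot : (x₀, c) ∈ Ω) (htop : (x₀, d) ∈ Ω)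
    {t : ℝ} (ht : t ∈ Ioo 0 1) :
    ∃ u, MemU Ω u ∧ (∃ z ∈ Ω, u z ≠ 0) ∧
      (2 - t) * ((d - c) / (b - a)) ≤ L1N Ω (ux u) / L1N Ω (uy u) := by
  have hx₀ : x₀ ∈ Icc a b := hx ▸ mem_image_of_mem Prod.fst hbot
  have hcd : c ≤ d := nonempty_Icc.1 (hy ▸ ⟨_, mem_image_of_mem Prod.snd hbot⟩)
  have hba : 0 < b - a := sub_pos.2 (hz₀x.1.trans hz₀x.2)
  set p := AffineMap.lineMap x₀ z₀.1 t
  have hp : p ∈ Ioo a b := lineMap_mem_Ioo hx₀ hz₀x (Ioo_subset_Ioc_self ht)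
  have hmem {z : ℝ × ℝ} (hz : z ∈ Ω) : AffineMap.lineMap z z₀ t ∈ Ω :=
    hΩconv.lineMap_mem hz (interior_subset hz₀) (Ioo_subset_Icc_self ht)
  have hge {y : ℝ} (hz : (x₀, y) ∈ Ω) :
      1 ≤ cutTent Ω a p b z₀ t (AffineMap.lineMap (x₀, y) z₀ t) :=
    one_le_cutTent_lineMap hz (Ioo_subset_Ioc_self ht) hp (AffineMap.fst_lineMap _ _ _)
  have hu := memU_cutTent hΩ hΩconv hz₀ hx hp ht.1
  refine ⟨_, hu, ⟨_, hmem hbot, (zero_lt_one.trans_le (hge hbot)).ne'⟩, ?_⟩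
  have huy : L1N Ω (uy (cutTent Ω a p b z₀ t)) = b - a := by
    refine le_antisymm (hu.L1N_uy_le_of_le_tent hΩ hx hp fun z _ => min_le_left _ _) ?_
    simpa only [sub_self, abs_zero, add_zero, one_mul] using
      hu.le_L1N_uy hΩ hx (hmem hbot) (hmem hbot) (hge hbot) (hge hbot)
  have hux := hu.le_L1N_ux hΩ hy (hmem hbot) (hmem htop) (hge hbot) (hge htop)
  rw [AffineMap.snd_lineMap, AffineMap.snd_lineMap, abs_sub_lineMap_same_right _ _ _ ht.2.le,
    abs_of_nonneg (sub_nonneg.2 hcd)] at hux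
  rw [huy, ← mul_div_assoc]
  exact div_le_div_of_nonneg_right (by linarith) hba.le

lemma exists_memU_lt_L1N_ux_div_L1N_uy (hΩ : IsCompact Ω) (hΩconv : Convex ℝ Ω)
    (hz₀ : z₀ ∈ interior Ω) (hz₀x : z₀.1 ∈ Ioo a b) (hcd : c < d) (hx : Prod.fst '' Ω = Icc a b)
    (hy : Prod.snd '' Ω = Icc c d) {x₀ : ℝ} (hbot : (x₀, c) ∈ Ω) (htop : (x₀, d) ∈ Ω)
    {r : ℝ} (hr : r < 2 * ((d - c) / (b - a))) :
    ∃ u, MemU Ω u ∧ (∃ z ∈ Ω, u z ≠ 0) ∧ r < L1N Ω (ux u) / L1N Ω (uy u) := by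
  have hslope : 0 < (d - c) / (b - a) :=
    div_pos (sub_pos.2 hcd) (sub_pos.2 (hz₀x.1.trans hz₀x.2))
  obtain ⟨t, ht0, ht⟩ := exists_between (lt_min one_pos (sub_pos.2 ((div_lt_iff₀ hslope).2 hr)))
  obtain ⟨u, hu, hne, hle⟩ := exists_memU_le_L1N_ux_div_L1N_uy hΩ hΩconv hz₀ hz₀x hx hy hbot htop
    ⟨ht0, ht.trans_le (min_le_left _ _)⟩
  refine ⟨u, hu, hne, lt_of_lt_of_le ?_ hle⟩
  rw [← div_lt_iff₀ hslope]
  linarith [ht.trans_le (min_le_right _ _)]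

end VerticalSegment

lemma mem_Ioo_of_mem_interior_of_image_eq_Icc {E : Type*} [TopologicalSpace E] {Ω : Set E}
    {π : E → ℝ} {a b : ℝ} {z : E} (hπ : IsOpenMap π) (himage : π '' Ω = Icc a b)
    (hz : z ∈ interior Ω) : π z ∈ Ioo a b := by
  rw [← interior_Icc, ← himage]
  exact hπ.image_interior_subset Ω (mem_image_of_mem π hz)

/-- Theorem 1, equality case: the supremum of `‖u_x‖₁ / ‖u_y‖₁` over nonzero
`u ∈ 𝒰_Ω` equals `2 w_y / w_x` iff `Ω` contains a vertical segment whose endpoints lie on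
the two horizontal sides of the circumscribed axis-parallel rectangle. -/
theorem stmt_5 (Ω : Set (ℝ × ℝ)) (hΩc : IsCompact Ω) (hΩconv : Convex ℝ Ω)
    (hΩint : (interior Ω).Nonempty)
    (a b c d : ℝ)
    (hprojx : (fun z : ℝ × ℝ => z.1) '' Ω = Icc a b)
    (hprojy : (fun z : ℝ × ℝ => z.2) '' Ω = Icc c d) :
    sSup {r : ℝ | ∃ u : ℝ × ℝ → ℝ, MemU Ω u ∧ (∃ z ∈ Ω, u z ≠ 0) ∧
        r = L1N Ω (ux u) / L1N Ω (uy u)} = 2 * ((d - c) / (b - a)) ↔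
      ∃ x₀ : ℝ, segment ℝ ((x₀, c) : ℝ × ℝ) (x₀, d) ⊆ Ω := by
  obtain ⟨z₀, hz₀⟩ := hΩint
  have hz₀x := mem_Ioo_of_mem_interior_of_image_eq_Icc isOpenMap_fst hprojx hz₀
  have hz₀y := mem_Ioo_of_mem_interior_of_image_eq_Icc isOpenMap_snd hprojy hz₀
  have hab : a < b := hz₀x.1.trans hz₀x.2
  have hcd : c < d := hz₀y.1.trans hz₀y.2
  constructor
  · intro hsup
    by_contra hseg
    obtain ⟨K, hK0, hKlt, hK⟩ :=
      exists_lt_forall_L1N_ux_div_L1N_uy_le hΩc hΩconv hab hcd hprojx hprojy hseg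
    refine (hsup ▸ hKlt).not_ge (Real.sSup_le ?_ hK0)
    rintro _ ⟨u, hu, hne, rfl⟩
    exact hK u hu hne
  · rintro ⟨x₀, hseg⟩
    have hexists (r : ℝ) (hr : r < 2 * ((d - c) / (b - a))) :=
      exists_memU_lt_L1N_ux_div_L1N_uy hΩc hΩconv hz₀ hz₀x hcd hprojx hprojy
        (hseg (left_mem_segment ℝ _ _)) (hseg (right_mem_segment ℝ _ _)) hr
    refine csSup_eq_of_forall_le_of_forall_lt_exists_gt ?_ ?_ fun r hr => ?_
    · obtain ⟨u, hu, hne, -⟩ := hexists _ (sub_one_lt _)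
      exact ⟨_, u, hu, hne, rfl⟩
    · rintro _ ⟨u, hu, hne, rfl⟩
      exact hu.L1N_ux_div_L1N_uy_le_two_mul hΩc hne hab hprojx hprojy
    · obtain ⟨u, hu, hne, hlt⟩ := hexists r hr
      exact ⟨_, ⟨u, hu, hne, rfl⟩, hlt⟩
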